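/- Let Cay(D_n, S) be a Cayley graph over the dihedral group D_n (n ≥ 2), let h be an integer with 1 ≤ h ≤ ⌊(n−1)/2⌋ such that η_h(S_2) ≠ 0, and let ℓ ∈ ℂ satisfy ℓ² η_h(S_2) = η_h(S_2^{-1}). Then the vector with entry −ω^{hk} at vertex a^k and entry ℓ·ω^{hk} at vertex b a^k (0 ≤ k ≤ n−1), and the vector with entry ℓ·ω^{−hk} at a^k and entry −ω^{−hk} at b a^k, are both eigenvectors of the adjacency matrix A with eigenvalue η_h(S_1) − ℓ·η_h(S_2). -/

import Mathlib

/-! Write `χ k = ω^{hk}`, a character of `ZMod n`, so that `η_h(C)` is the sum of `χ` over the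
`k : ZMod n` with `a^k ∈ C`. A row of `A *ᵥ v` splits into a sum over rotations and a sum over
reflections; after translating the summation variable each becomes, up to the constant
`-1` or `ℓ`, the value of `χ` at the row index or its negative, times `η_h(S_1)` (using `S = S⁻¹`), `η_h(S_2)` or `η_h(S_2⁻¹)`. The relation
`ℓ² η_h(S_2) = η_h(S_2⁻¹)` then makes both kinds of rows agree with the claimed eigenvalue. -/

open Polynomial Matrix

noncomputable section

namespace PaperPST

/-! ### Grover-walk PST data for Cayley graphs over a general finite group -/

/-- The adjacency matrix of the Cayley graph `Cay(Γ, S)`: `A u v = 1` iff `u * v⁻¹ ∈ S`. -/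
def adjG (Γ : Type*) [Group Γ] [Fintype Γ] [DecidableEq Γ] (S : Finset Γ) : Matrix Γ Γ ℂ :=
  Matrix.of fun u v => if u * v⁻¹ ∈ S then 1 else 0

/-- The discriminant matrix `P = (1/|S|) A` of `Cay(Γ, S)`. -/
def discG (Γ : Type*) [Group Γ] [Fintype Γ] [DecidableEq Γ] (S : Finset Γ) : Matrix Γ Γ ℂ :=
  (S.card : ℂ)⁻¹ • adjG Γ S

/-- `T_τ(P)`, the `τ`-th Chebyshev polynomial of the first kind evaluated at the
discriminant matrix of `Cay(Γ, S)`. -/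
def chebG (Γ : Type*) [Group Γ] [Fintype Γ] [DecidableEq Γ] (S : Finset Γ) (τ : ℕ) :
    Matrix Γ Γ ℂ :=
  Polynomial.aeval (discG Γ S) (Polynomial.Chebyshev.T ℂ τ)

/-- Perfect state transfer between vertices `u` and `v` of `Cay(Γ, S)` at time `τ`:
`T_τ(P) e_u = e_v`. -/
def PSTG (Γ : Type*) [Group Γ] [Fintype Γ] [DecidableEq Γ] (S : Finset Γ) (τ : ℕ)
    (u v : Γ) : Prop :=
  chebG Γ S τ *ᵥ Pi.single u 1 = Pi.single v 1

/-- Evaluation of the `τ`-th Chebyshev polynomial of the first kind at a complex number. -/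
def Teval (τ : ℕ) (x : ℂ) : ℂ := (Polynomial.Chebyshev.T ℂ τ).eval x

/-! ### Specialization to the dihedral group `D_n` -/

/-- Test whether an element of the dihedral group is a rotation `a^k`. -/
def isRot {n : ℕ} : DihedralGroup n → Bool
  | .r _ => true
  | .sr _ => false

/-- The adjacency matrix of the Cayley graph `Cay(D_n, S)`. -/
def adjC (n : ℕ) (S : Finset (DihedralGroup n)) :
    Matrix (DihedralGroup n) (DihedralGroup n) ℂ :=
  Matrix.of fun u v => if u * v⁻¹ ∈ S then 1 else 0

/-- The discriminant matrix `P = (1/|S|) A` of `Cay(D_n, S)`. -/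
def disc (n : ℕ) (S : Finset (DihedralGroup n)) :
    Matrix (DihedralGroup n) (DihedralGroup n) ℂ :=
  (S.card : ℂ)⁻¹ • adjC n S

/-- `T_τ(P)`, the `τ`-th Chebyshev polynomial of the first kind evaluated at the
discriminant matrix. -/
def chebP (n : ℕ) [NeZero n] (S : Finset (DihedralGroup n)) (τ : ℕ) :
    Matrix (DihedralGroup n) (DihedralGroup n) ℂ :=
  Polynomial.aeval (disc n S) (Polynomial.Chebyshev.T ℂ τ)

/-- Perfect state transfer between vertices `u` and `v` of `Cay(D_n, S)` at time `τ`: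
`T_τ(P) e_u = e_v`. -/
def PST (n : ℕ) [NeZero n] (S : Finset (DihedralGroup n)) (τ : ℕ)
    (u v : DihedralGroup n) : Prop :=
  chebP n S τ *ᵥ Pi.single u 1 = Pi.single v 1

/-- `ω = e^{2πi/n}`. -/
def omega (n : ℕ) : ℂ := Complex.exp (2 * Real.pi * Complex.I / n)

/-- `η_h(C) = Σ_{0 ≤ k ≤ n-1, a^k ∈ C} ω^{hk}`. -/
def eta (n : ℕ) (h : ℕ) (C : Finset (DihedralGroup n)) : ℂ :=
  ∑ k ∈ Finset.range n, if DihedralGroup.r (k : ZMod n) ∈ C then omega n ^ (h * k) else 0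

/-- `S_1 = S ∩ ⟨a⟩`. -/
def S1 (n : ℕ) (S : Finset (DihedralGroup n)) : Finset (DihedralGroup n) :=
  S.filter fun x => isRot x

/-- `S_2 = bS ∩ ⟨a⟩`, i.e. `{a^k : b a^k ∈ S}`. -/
def S2 (n : ℕ) (S : Finset (DihedralGroup n)) : Finset (DihedralGroup n) :=
  (S.image fun s => DihedralGroup.sr 0 * s).filter fun x => isRot x

/-- `S_2⁻¹ = {s⁻¹ : s ∈ S_2}`. -/
def S2inv (n : ℕ) (S : Finset (DihedralGroup n)) : Finset (DihedralGroup n) :=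
  (S2 n S).image fun x => x⁻¹

/-- The number of `a^k ∈ C` with `0 ≤ k ≤ n-1` and `k % 2 = p`. -/
def dcnt (n : ℕ) (C : Finset (DihedralGroup n)) (p : ℕ) : ℕ :=
  ((Finset.range n).filter fun k => k % 2 = p ∧ DihedralGroup.r (k : ZMod n) ∈ C).card

/-- Vertex labels `0, …, 2n-1`: label `u < n` is `a^u`, and label `n ≤ u < 2n` is `b a^{u-n}`. -/
def lab (n : ℕ) (u : ℕ) : DihedralGroup n :=
  if u < n then DihedralGroup.r (u : ZMod n) else DihedralGroup.sr ((u - n : ℕ) : ZMod n)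

/-- `Cay(D_n, S)` is a normal Cayley graph if `S` is closed under conjugation. -/
def IsNormalCay (n : ℕ) (S : Finset (DihedralGroup n)) : Prop :=
  ∀ g : DihedralGroup n, ∀ s ∈ S, g * s * g⁻¹ ∈ S

/-- `Cay(D_n, S)` exhibits PST at the minimum time `τ`. -/
def exhibitsMinPST (n : ℕ) [NeZero n] (S : Finset (DihedralGroup n)) (τ : ℕ) : Prop :=
  (∃ u v : DihedralGroup n, u ≠ v ∧ PST n S τ u v) ∧
  ∀ σ : ℕ, 1 ≤ σ → σ < τ → ∀ u v : DihedralGroup n, u ≠ v → ¬ PST n S σ u v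

/-! ### Eigenvector candidates -/

/-- The all-ones vector. -/
def w1 (n : ℕ) : DihedralGroup n → ℂ := fun _ => 1

/-- The vector which is `1` on `G_0` and `-1` on `G_1`. -/
def w2 (n : ℕ) : DihedralGroup n → ℂ
  | .r _ => 1
  | .sr _ => -1

/-- The vector with entry `(-1)^k` at `a^k` and `(-1)^k` at `b a^k`. -/
def w3 (n : ℕ) : DihedralGroup n → ℂ
  | .r k => (-1) ^ k.val
  | .sr k => (-1) ^ k.val

/-- The vector with entry `(-1)^k` at `a^k` and `(-1)^{k+1}` at `b a^k`. -/
def w4 (n : ℕ) : DihedralGroup n → ℂ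
  | .r k => (-1) ^ k.val
  | .sr k => (-1) ^ (k.val + 1)

/-- The vector with entry `ω^{hk}` at `a^k` and `0` at `b a^k`. -/
def uv1 (n h : ℕ) : DihedralGroup n → ℂ
  | .r k => omega n ^ (h * k.val)
  | .sr _ => 0

/-- The vector with entry `0` at `a^k` and `ω^{hk}` at `b a^k`. -/
def uv2 (n h : ℕ) : DihedralGroup n → ℂ
  | .r _ => 0
  | .sr k => omega n ^ (h * k.val)

/-- The vector with entry `0` at `a^k` and `ω^{-hk}` at `b a^k`. -/
def uv3 (n h : ℕ) : DihedralGroup n → ℂ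
  | .r _ => 0
  | .sr k => (omega n)⁻¹ ^ (h * k.val)

/-- The vector with entry `ω^{-hk}` at `a^k` and `0` at `b a^k`. -/
def uv4 (n h : ℕ) : DihedralGroup n → ℂ
  | .r k => (omega n)⁻¹ ^ (h * k.val)
  | .sr _ => 0

/-- The vector with entry `conj(ℓ)·ω^{hk}` at `a^k` and `ω^{hk}` at `b a^k`. -/
def vv1 (n h : ℕ) (ℓ : ℂ) : DihedralGroup n → ℂ
  | .r k => (starRingEnd ℂ) ℓ * omega n ^ (h * k.val)
  | .sr k => omega n ^ (h * k.val)

/-- The vector with entry `ω^{-hk}` at `a^k` and `conj(ℓ)·ω^{-hk}` at `b a^k`. -/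
def vv2 (n h : ℕ) (ℓ : ℂ) : DihedralGroup n → ℂ
  | .r k => (omega n)⁻¹ ^ (h * k.val)
  | .sr k => (starRingEnd ℂ) ℓ * (omega n)⁻¹ ^ (h * k.val)

/-- The vector with entry `-ω^{hk}` at `a^k` and `ℓ·ω^{hk}` at `b a^k`. -/
def vv3 (n h : ℕ) (ℓ : ℂ) : DihedralGroup n → ℂ
  | .r k => -(omega n ^ (h * k.val))
  | .sr k => ℓ * omega n ^ (h * k.val)

/-- The vector with entry `ℓ·ω^{-hk}` at `a^k` and `-ω^{-hk}` at `b a^k`. -/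
def vv4 (n h : ℕ) (ℓ : ℂ) : DihedralGroup n → ℂ
  | .r k => ℓ * (omega n)⁻¹ ^ (h * k.val)
  | .sr k => -((omega n)⁻¹ ^ (h * k.val))

/-- The character `k ↦ ω^{hk}` of `ZMod n`, evaluated on the representative in `[0, n)`. -/
def chi (n h : ℕ) (k : ZMod n) : ℂ := omega n ^ (h * k.val)

lemma omega_pow_n (n : ℕ) [NeZero n] : omega n ^ n = 1 :=
  (Complex.isPrimitiveRoot_exp n (NeZero.ne n)).pow_eq_one

lemma chi_zero (n h : ℕ) [NeZero n] : chi n h 0 = 1 := by simp [chi]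

lemma chi_add (n h : ℕ) [NeZero n] (i j : ZMod n) :
    chi n h (i + j) = chi n h i * chi n h j := by
  have hper : (omega n ^ h) ^ n = 1 := by
    rw [← pow_mul, mul_comm, pow_mul, omega_pow_n, one_pow]
  simp only [chi, pow_mul]
  rw [← pow_add, ZMod.val_add, ← pow_eq_pow_mod _ hper]

lemma chi_neg (n h : ℕ) [NeZero n] (i : ZMod n) : chi n h (-i) = (chi n h i)⁻¹ := by
  apply eq_inv_of_mul_eq_one_left
  rw [← chi_add, neg_add_cancel, chi_zero]

lemma eta_eq_sum (n h : ℕ) [NeZero n] (C : Finset (DihedralGroup n)) :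
    eta n h C = ∑ k : ZMod n, if DihedralGroup.r k ∈ C then chi n h k else 0 := by
  unfold eta
  refine Finset.sum_bij' (fun k _ => (k : ZMod n)) (fun k _ => k.val) ?_ ?_ ?_ ?_ ?_
  · simp
  · intro k _
    simpa using ZMod.val_lt k
  · intro k hk
    exact ZMod.val_cast_of_lt (Finset.mem_range.1 hk)
  · intro k _
    simp
  · intro k hk
    simp only [chi, ZMod.val_cast_of_lt (Finset.mem_range.1 hk)]

lemma r_mem_S1 {n : ℕ} (S : Finset (DihedralGroup n)) (k : ZMod n) :
    DihedralGroup.r k ∈ S1 n S ↔ DihedralGroup.r k ∈ S := by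
  rw [S1, Finset.mem_filter]
  simp [isRot]

lemma r_mem_S2 {n : ℕ} (S : Finset (DihedralGroup n)) (k : ZMod n) :
    DihedralGroup.r k ∈ S2 n S ↔ DihedralGroup.sr k ∈ S := by
  rw [S2, Finset.mem_filter, Finset.mem_image]
  simp only [isRot, and_true]
  constructor
  · rintro ⟨s | s, hs, he⟩
    · simp at he
    · simp only [DihedralGroup.sr_mul_sr, sub_zero, DihedralGroup.r.injEq] at he
      exact he ▸ hs
  · intro hk
    exact ⟨_, hk, by simp⟩

lemma r_mem_S2inv {n : ℕ} (S : Finset (DihedralGroup n)) (k : ZMod n) :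
    DihedralGroup.r k ∈ S2inv n S ↔ DihedralGroup.sr (-k) ∈ S := by
  rw [← r_mem_S2, S2inv, Finset.mem_image]
  constructor
  · rintro ⟨x, hx, he⟩
    rw [← DihedralGroup.inv_r, ← he, inv_inv]
    exact hx
  · intro hk
    exact ⟨_, hk, by simp⟩

lemma sum_dihedral {n : ℕ} [NeZero n] (f : DihedralGroup n → ℂ) :
    ∑ x, f x = ∑ k : ZMod n, f (.r k) + ∑ k : ZMod n, f (.sr k) := by
  rw [← Equiv.sum_comp DihedralGroup.equivSum.symm, Fintype.sum_sum_type]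
  rfl

/-- Row `a^i` of `A *ᵥ v`, with the summation variable translated to the connection set. -/
lemma adj_mulVec_r {n : ℕ} [NeZero n] (S : Finset (DihedralGroup n))
    (hSinv : ∀ s ∈ S, s⁻¹ ∈ S) (v : DihedralGroup n → ℂ) (i : ZMod n) :
    (adjC n S *ᵥ v) (.r i) =
      (∑ m : ZMod n, if .r m ∈ S then v (.r (i + m)) else 0) +
      ∑ m : ZMod n, if .sr m ∈ S then v (.sr (i + m)) else 0 := by
  have hinv : ∀ m : ZMod n, DihedralGroup.r (-m) ∈ S ↔ DihedralGroup.r m ∈ S := fun m =>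
    ⟨fun hm => by simpa using hSinv _ hm, fun hm => by simpa using hSinv _ hm⟩
  simp only [mulVec, dotProduct, sum_dihedral, adjC, of_apply]
  congr 1
  · rw [← Equiv.sum_comp (Equiv.addLeft i)]
    simp [hinv]
  · rw [← Equiv.sum_comp (Equiv.addLeft i)]
    simp

/-- Row `b a^i` of `A *ᵥ v`, with the summation variable translated to the connection set. -/
lemma adj_mulVec_sr {n : ℕ} [NeZero n] (S : Finset (DihedralGroup n))
    (v : DihedralGroup n → ℂ) (i : ZMod n) :
    (adjC n S *ᵥ v) (.sr i) =
      (∑ m : ZMod n, if .sr (-m) ∈ S then v (.r (i + m)) else 0) +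
      ∑ m : ZMod n, if .r m ∈ S then v (.sr (i + m)) else 0 := by
  simp only [mulVec, dotProduct, sum_dihedral, adjC, of_apply]
  congr 1
  · rw [← Equiv.sum_comp (Equiv.addLeft i)]
    simp
  · rw [← Equiv.sum_comp (Equiv.addLeft i)]
    simp

/-- Applied to the translated rows of `A *ᵥ v`, where `v` restricts to `c • χ` on the rotations or
the reflections: the row index factors out of the character sum. -/
lemma sum_chi_shift {n h : ℕ} [NeZero n] (P : ZMod n → Prop) [DecidablePred P] (c : ℂ)
    (i : ZMod n) :
    (∑ m : ZMod n, if P m then c * chi n h (i + m) else 0) =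
      c * chi n h i * ∑ m : ZMod n, if P m then chi n h m else 0 := by
  rw [Finset.mul_sum]
  refine Finset.sum_congr rfl fun m _ => ?_
  split_ifs
  · rw [chi_add, mul_assoc]
  · simp

lemma sum_chi_neg_shift {n h : ℕ} [NeZero n] (P : ZMod n → Prop) [DecidablePred P] (c : ℂ)
    (i : ZMod n) :
    (∑ m : ZMod n, if P m then c * chi n h (-(i + m)) else 0) =
      c * chi n h (-i) * ∑ m : ZMod n, if P (-m) then chi n h m else 0 := by
  rw [← sum_chi_shift, ← Equiv.sum_comp (Equiv.neg (ZMod n))]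
  simp [add_comm]

theorem stmt_4 (n : ℕ) [NeZero n] (hn : 2 ≤ n)
    (S : Finset (DihedralGroup n)) (hS1 : (1 : DihedralGroup n) ∉ S)
    (hSinv : ∀ s ∈ S, s⁻¹ ∈ S) (hSne : S.Nonempty)
    (h : ℕ) (hh1 : 1 ≤ h) (hh2 : h ≤ (n - 1) / 2) (hnz : eta n h (S2 n S) ≠ 0)
    (ℓ : ℂ) (hℓ : ℓ ^ 2 * eta n h (S2 n S) = eta n h (S2inv n S)) :
    (adjC n S *ᵥ vv3 n h ℓ =
      (eta n h (S1 n S) - ℓ * eta n h (S2 n S)) • vv3 n h ℓ ∧ vv3 n h ℓ ≠ 0) ∧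
    (adjC n S *ᵥ vv4 n h ℓ =
      (eta n h (S1 n S) - ℓ * eta n h (S2 n S)) • vv4 n h ℓ ∧ vv4 n h ℓ ≠ 0) := by
  have e1 : eta n h (S1 n S) = ∑ m : ZMod n, if .r m ∈ S then chi n h m else 0 := by
    simp only [eta_eq_sum, r_mem_S1]
  have e1' : eta n h (S1 n S) = ∑ m : ZMod n, if .r (-m) ∈ S then chi n h m else 0 := by
    have hinv : ∀ m : ZMod n, DihedralGroup.r (-m) ∈ S ↔ DihedralGroup.r m ∈ S := fun m =>
      ⟨fun hm => by simpa using hSinv _ hm, fun hm => by simpa using hSinv _ hm⟩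
    simp only [e1, hinv]
  have e2 : eta n h (S2 n S) = ∑ m : ZMod n, if .sr m ∈ S then chi n h m else 0 := by
    simp only [eta_eq_sum, r_mem_S2]
  have e3 : eta n h (S2inv n S) = ∑ m : ZMod n, if .sr (-m) ∈ S then chi n h m else 0 := by
    simp only [eta_eq_sum, r_mem_S2inv]
  have v3r : ∀ k, vv3 n h ℓ (.r k) = (-1) * chi n h k := fun k => by simp [vv3, chi]
  have v3s : ∀ k, vv3 n h ℓ (.sr k) = ℓ * chi n h k := fun k => rfl
  have v4r : ∀ k, vv4 n h ℓ (.r k) = ℓ * chi n h (-k) := fun k => by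
    rw [chi_neg]
    simp [vv4, chi]
  have v4s : ∀ k, vv4 n h ℓ (.sr k) = (-1) * chi n h (-k) := fun k => by
    rw [chi_neg]
    simp [vv4, chi]
  refine ⟨⟨?_, ?_⟩, ?_, ?_⟩
  · ext (i | i)
    · rw [adj_mulVec_r S hSinv, Pi.smul_apply, smul_eq_mul]
      simp only [v3r, v3s]
      rw [sum_chi_shift, sum_chi_shift, ← e1, ← e2]
      ring
    · rw [adj_mulVec_sr S, Pi.smul_apply, smul_eq_mul]
      simp only [v3r, v3s]
      rw [sum_chi_shift, sum_chi_shift, ← e1, ← e3]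
      linear_combination chi n h i * hℓ
  · intro h0
    have := congrFun h0 (.r 0)
    rw [v3r, chi_zero] at this
    simp at this
  · ext (i | i)
    · rw [adj_mulVec_r S hSinv, Pi.smul_apply, smul_eq_mul]
      simp only [v4r, v4s]
      rw [sum_chi_neg_shift, sum_chi_neg_shift, ← e1', ← e3]
      linear_combination chi n h (-i) * hℓ
    · rw [adj_mulVec_sr S, Pi.smul_apply, smul_eq_mul]
      simp only [v4r, v4s]
      rw [sum_chi_neg_shift (fun m => DihedralGroup.sr (-m) ∈ S),
        sum_chi_neg_shift (fun m => DihedralGroup.r m ∈ S), ← e1']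
      simp only [neg_neg]
      rw [← e2]
      ring
  · intro h0
    have := congrFun h0 (.sr 0)
    rw [v4s, neg_zero, chi_zero] at this
    simp at this

end PaperPST
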